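/- Given types 0 < λ_1 < λ_2 < ⋯ < λ_T and a feasible quality assignment w_1 ≤ w_2 ≤ ⋯ ≤ w_T, the contract whose prices are the optimal pricing p̂ (defined by p̂_1 = U(λ_1, w_1) and p̂_k = p̂_{k−1} + U(λ_k, w_k) − U(λ_k, w_{k−1}) for k = 2,…,T) is feasible: all prices are nonnegative and all IC and IR constraints hold. -/

import Mathlib

/-!
The utility has increasing differences: for `0 ≤ a ≤ b` and `m ≤ n`,
`U(a, n) - U(a, m) ≤ U(b, n) - U(b, m)` (`utility_sub_le_utility_sub`). This holds because the
difference is a sum of Poisson tails, and each tail is monotone in the mean: the derivative of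
`exp (-x) * ∑ i ≤ k, x ^ i / i!` telescopes to `-exp (-x) * x ^ k / k!`.

The prices make every adjacent downward IC constraint tight. Summing these equalities from `s` to
`t` and using increasing differences sandwiches the price difference for `s ≤ t`,
`U(λ_s, w_t) - U(λ_s, w_s) ≤ p_t - p_s ≤ U(λ_t, w_t) - U(λ_t, w_s)`.
The two bounds are the upward and downward IC constraints. With `s = 1` and
`p_1 = U(λ_1, w_1)`, the lower bound gives `p_t ≥ U(λ_1, w_t) ≥ 0`, and the upper bound gives IR
since `U(λ_t, w_1) ≥ U(λ_1, w_1)`.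
-/

/-- Tail probability of a Poisson random variable with mean `lam` at threshold `k`. -/
noncomputable def poissonTail (lam : ℝ) (k : ℕ) : ℝ :=
  1 - Real.exp (-lam) * ∑ i ∈ Finset.range k, lam ^ i / (Nat.factorial i : ℝ)

/-- Utility of a `lam`-type UAV obtaining `w` channels: `U(lam, w) = ∑_{k=1}^{w} P(X_lam ≥ k)`. -/
noncomputable def utility (lam : ℝ) (w : ℕ) : ℝ :=
  ∑ k ∈ Finset.Icc 1 w, poissonTail lam k

/-- A contract `(w, p)` for `T` types `lam 1 < ⋯ < lam T` is feasible if prices are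
nonnegative, and the IC and IR constraints hold. -/
def Feasible (T : ℕ) (lam : ℕ → ℝ) (w : ℕ → ℕ) (p : ℕ → ℝ) : Prop :=
  (∀ t, 1 ≤ t → t ≤ T → 0 ≤ p t) ∧
  (∀ t s, 1 ≤ t → t ≤ T → 1 ≤ s → s ≤ T → s ≠ t →
    utility (lam t) (w t) - p t ≥ utility (lam t) (w s) - p s) ∧
  (∀ t, 1 ≤ t → t ≤ T → utility (lam t) (w t) - p t ≥ 0)

/-- The derivative of the Poisson distribution function in its mean telescopes to a single term. -/
lemma hasDerivAt_exp_neg_mul_sum (k : ℕ) (x : ℝ) :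
    HasDerivAt (fun y : ℝ => Real.exp (-y) *
        ∑ i ∈ Finset.range (k + 1), y ^ i / (Nat.factorial i : ℝ))
      (-(Real.exp (-x) * (x ^ k / (Nat.factorial k : ℝ)))) x := by
  have hexp : HasDerivAt (fun y : ℝ => Real.exp (-y)) (-Real.exp (-x)) x := by
    simpa using (hasDerivAt_neg x).exp
  induction k with
  | zero => simpa using hexp
  | succ k ih =>
    have hterm := hexp.mul ((hasDerivAt_pow (k + 1) x).div_const (Nat.factorial (k + 1) : ℝ))
    have hsum := ih.add hterm
    refine (hsum.congr_deriv ?_).congr_of_eventuallyEq (.of_forall fun y => ?_)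
    · have hk : (Nat.factorial k : ℝ) ≠ 0 := by positivity
      rw [Nat.factorial_succ]
      push_cast
      field_simp
      ring
    · simp only [Finset.sum_range_succ _ (k + 1), mul_add, Pi.add_apply, Pi.mul_apply]

lemma poissonTail_mono {a b : ℝ} (ha : 0 ≤ a) (hab : a ≤ b) (k : ℕ) :
    poissonTail a k ≤ poissonTail b k := by
  cases k with
  | zero => simp [poissonTail]
  | succ k =>
    have hanti : AntitoneOn (fun y : ℝ => Real.exp (-y) *
        ∑ i ∈ Finset.range (k + 1), y ^ i / (Nat.factorial i : ℝ)) (Set.Ici 0) := by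
      refine antitoneOn_of_deriv_nonpos (convex_Ici 0)
        (fun x _ => (hasDerivAt_exp_neg_mul_sum k x).continuousAt.continuousWithinAt)
        (fun x _ => (hasDerivAt_exp_neg_mul_sum k x).differentiableAt.differentiableWithinAt)
        (fun x hx => ?_)
      rw [interior_Ici, Set.mem_Ioi] at hx
      rw [(hasDerivAt_exp_neg_mul_sum k x).deriv]
      exact neg_nonpos.mpr (by positivity)
    exact sub_le_sub_left (hanti (Set.mem_Ici.mpr ha) (Set.mem_Ici.mpr (ha.trans hab)) hab) 1

lemma poissonTail_nonneg {a : ℝ} (ha : 0 ≤ a) (k : ℕ) : 0 ≤ poissonTail a k := by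
  have h := mul_le_mul_of_nonneg_left (Real.sum_le_exp_of_nonneg ha k) (Real.exp_pos (-a)).le
  rw [← Real.exp_add, neg_add_cancel, Real.exp_zero] at h
  exact sub_nonneg.mpr h

lemma utility_nonneg {a : ℝ} (ha : 0 ≤ a) (n : ℕ) : 0 ≤ utility a n :=
  Finset.sum_nonneg fun k _ => poissonTail_nonneg ha k

lemma utility_succ (a : ℝ) (n : ℕ) :
    utility a (n + 1) = utility a n + poissonTail a (n + 1) :=
  Finset.sum_Icc_succ_top (by omega) _

/-- Increasing differences (the single-crossing property) of the utility. -/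
lemma utility_sub_le_utility_sub {a b : ℝ} (ha : 0 ≤ a) (hab : a ≤ b) {m n : ℕ} (hmn : m ≤ n) :
    utility a n - utility a m ≤ utility b n - utility b m := by
  induction n, hmn using Nat.le_induction with
  | base => simp
  | succ n _ ih =>
    rw [utility_succ, utility_succ]
    linarith [poissonTail_mono ha hab (n + 1)]

lemma utility_mono_left {a b : ℝ} (ha : 0 ≤ a) (hab : a ≤ b) (n : ℕ) :
    utility a n ≤ utility b n := by
  simpa [utility] using utility_sub_le_utility_sub ha hab (Nat.zero_le n)

theorem optimal_pricing_feasible (T : ℕ) (hT : 1 ≤ T) (lam : ℕ → ℝ) (w : ℕ → ℕ)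
    (hpos : ∀ t, 1 ≤ t → t ≤ T → 0 < lam t)
    (hmono : ∀ i j, 1 ≤ i → i < j → j ≤ T → lam i < lam j)
    (hw : ∀ i j, 1 ≤ i → i ≤ j → j ≤ T → w i ≤ w j)
    (phat : ℕ → ℝ) (hphat1 : phat 1 = utility (lam 1) (w 1))
    (hphatk : ∀ k, 2 ≤ k → k ≤ T →
      phat k = phat (k - 1) + utility (lam k) (w k) - utility (lam k) (w (k - 1))) :
    Feasible T lam w phat := by
  have hle : ∀ i j, 1 ≤ i → i ≤ j → j ≤ T → lam i ≤ lam j := fun i j hi hij hj =>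
    hij.eq_or_lt.elim (fun h => h ▸ le_rfl) fun h => (hmono i j hi h hj).le
  have hstep : ∀ t, 1 ≤ t → t + 1 ≤ T →
      phat (t + 1) = phat t + utility (lam (t + 1)) (w (t + 1)) - utility (lam (t + 1)) (w t) :=
    fun t ht htT => hphatk (t + 1) (by omega) htT
  have upper : ∀ s t, 1 ≤ s → s ≤ t → t ≤ T →
      phat t - phat s ≤ utility (lam t) (w t) - utility (lam t) (w s) := by
    intro s t hs hst
    induction t, hst using Nat.le_induction with
    | base => simp
    | succ t hst ih =>
      intro htT
      have h := utility_sub_le_utility_sub (hpos t (by omega) (by omega)).le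
        (hle t (t + 1) (by omega) (by omega) htT) (hw s t hs hst (by omega))
      linarith [ih (by omega), hstep t (by omega) htT]
  have lower : ∀ s t, 1 ≤ s → s ≤ t → t ≤ T →
      utility (lam s) (w t) - utility (lam s) (w s) ≤ phat t - phat s := by
    intro s t hs hst
    induction t, hst using Nat.le_induction with
    | base => simp
    | succ t hst ih =>
      intro htT
      have h := utility_sub_le_utility_sub (hpos s hs (by omega)).le
        (hle s (t + 1) hs (by omega) htT) (hw t (t + 1) (by omega) (by omega) htT)
      linarith [ih (by omega), hstep t (by omega) htT]
  have hpos1 : 0 ≤ lam 1 := (hpos 1 le_rfl hT).le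
  refine ⟨fun t ht htT => ?_, fun t s ht htT hs hsT _ => ?_, fun t ht htT => ?_⟩
  · linarith [lower 1 t le_rfl ht htT, utility_nonneg hpos1 (w t)]
  · rcases le_total s t with hst | hts
    · linarith [upper s t hs hst htT]
    · linarith [lower t s ht hts hsT]
  · linarith [upper 1 t le_rfl ht htT, utility_mono_left hpos1 (hle 1 t le_rfl ht htT) (w 1)]
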